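/- Let m ≥ 1, let ρ > 0, and let M ⊆ Δ_ρ be nonempty. If two sets H_0, H_1 ⊆ Δ_ρ satisfy ∂^0_ρ M ⊆ H_0 ⊆ M and ∂^1_ρ M ⊆ H_1 ⊆ M^c ∩ Δ_ρ, then ∂^0_ρ M = {x ∈ H_0 : dist(x, H_1) = ρ} and ∂^1_ρ M = {z ∈ H_1 : dist(z, H_0) = ρ}. -/

import Mathlib

/-!
Distinct grid points are at distance exactly `ρ` or at least `2ρ`. Across such a gap, being at
infimum distance `ρ` from a set means having an actual point of the set at distance `ρ`, so both
boundary layers are the ends of the edges of length `ρ` between `M` and `Mᶜ ∩ Δ_ρ`. Shrinking the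
two sides destroys none of these edges as long as their ends are kept.
-/

noncomputable section

/-- The grid `Δ_ρ = ρℤ^m` in `ℝ^m` (with the maximum norm). -/
def grid (m : ℕ) (ρ : ℝ) : Set (Fin m → ℝ) := {x | ∀ j, ∃ k : ℤ, x j = ρ * k}

/-- `∂⁰_ρ M`: points of `M` having a grid neighbour in the complement at distance `ρ`. -/
def bdry0 (m : ℕ) (ρ : ℝ) (M : Set (Fin m → ℝ)) : Set (Fin m → ℝ) :=
  {x | x ∈ M ∧ ∃ z ∈ Mᶜ ∩ grid m ρ, dist x z = ρ}

/-- `∂¹_ρ M`: grid points of the complement at distance `ρ` from `∂⁰_ρ M`. -/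
def bdry1 (m : ℕ) (ρ : ℝ) (M : Set (Fin m → ℝ)) : Set (Fin m → ℝ) :=
  {z | z ∈ Mᶜ ∩ grid m ρ ∧ Metric.infDist z (bdry0 m ρ M) = ρ}

section PseudoMetricSpace

variable {X : Type*} [PseudoMetricSpace X] {ρ r : ℝ} {A A₀ B B₀ : Set X}

/-- The points of `A` at distance exactly `ρ` from some point of `B`: the ends in `A` of the edges
of length `ρ` between `A` and `B`. Both boundary layers are of this form, with the roles of `M` and
its grid complement exchanged. -/
def contactSet (ρ : ℝ) (A B : Set X) : Set X :=
  {x | x ∈ A ∧ ∃ y ∈ B, dist x y = ρ}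

theorem contactSet_subset_left : contactSet ρ A B ⊆ A :=
  fun _ hx ↦ hx.1

theorem contactSet_eq_of_subset (hA : contactSet ρ A B ⊆ A₀) (hA₀ : A₀ ⊆ A)
    (hB : contactSet ρ B A ⊆ B₀) (hB₀ : B₀ ⊆ B) :
    contactSet ρ A₀ B₀ = contactSet ρ A B := by
  refine Set.Subset.antisymm ?_ ?_
  · rintro x ⟨hx, y, hy, hxy⟩
    exact ⟨hA₀ hx, y, hB₀ hy, hxy⟩
  · rintro x ⟨hx, y, hy, hxy⟩
    have hy' : y ∈ contactSet ρ B A := ⟨hy, x, hx, by rwa [dist_comm]⟩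
    exact ⟨hA ⟨hx, y, hy, hxy⟩, y, hB hy', hxy⟩

theorem infDist_eq_iff_exists_dist_eq {x : X} (hρ : 0 < ρ) (hr : ρ < r)
    (gap : ∀ y ∈ B, dist x y = ρ ∨ r ≤ dist x y) :
    Metric.infDist x B = ρ ↔ ∃ y ∈ B, dist x y = ρ := by
  constructor
  · intro h
    -- `infDist x ∅ = 0`, so a positive value forces `B` to be nonempty.
    have hB : B.Nonempty := by
      by_contra hB
      rw [Set.not_nonempty_iff_eq_empty.mp hB, Metric.infDist_empty] at h
      exact hρ.ne h
    obtain ⟨y, hy, hyr⟩ := (Metric.infDist_lt_iff hB).mp (h.trans_lt hr)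
    exact ⟨y, hy, (gap y hy).resolve_right hyr.not_ge⟩
  · rintro ⟨y, hy, hxy⟩
    refine le_antisymm (hxy ▸ Metric.infDist_le_dist_of_mem hy) ?_
    exact (Metric.le_infDist ⟨y, hy⟩).mpr fun z hz ↦ (gap z hz).elim Eq.ge hr.le.trans

theorem setOf_infDist_eq_contactSet (hρ : 0 < ρ) (hr : ρ < r)
    (gap : ∀ x ∈ A, ∀ y ∈ B, dist x y = ρ ∨ r ≤ dist x y)
    (hA : contactSet ρ A B ⊆ A₀) (hA₀ : A₀ ⊆ A) (hB : contactSet ρ B A ⊆ B₀) (hB₀ : B₀ ⊆ B) :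
    {x | x ∈ A₀ ∧ Metric.infDist x B₀ = ρ} = contactSet ρ A B := by
  rw [← contactSet_eq_of_subset hA hA₀ hB hB₀]
  ext x
  exact and_congr_right fun hx ↦
    infDist_eq_iff_exists_dist_eq hρ hr fun y hy ↦ gap x (hA₀ hx) y (hB₀ hy)

theorem stmt7_general {M N H0 H1 : Set X} (hρ : 0 < ρ) (hr : ρ < r)
    (gap : ∀ x ∈ M, ∀ z ∈ N, dist x z = ρ ∨ r ≤ dist x z)
    (h00 : contactSet ρ M N ⊆ H0) (h01 : H0 ⊆ M)
    (h10 : {z | z ∈ N ∧ Metric.infDist z (contactSet ρ M N) = ρ} ⊆ H1) (h11 : H1 ⊆ N) :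
    contactSet ρ M N = {x | x ∈ H0 ∧ Metric.infDist x H1 = ρ} ∧
    {z | z ∈ N ∧ Metric.infDist z (contactSet ρ M N) = ρ} =
      {z | z ∈ H1 ∧ Metric.infDist z H0 = ρ} := by
  have gap_symm : ∀ z ∈ N, ∀ x ∈ M, dist z x = ρ ∨ r ≤ dist z x := fun z hz x hx ↦ by
    simpa only [dist_comm] using gap x hx z hz
  have outer_eq : {z | z ∈ N ∧ Metric.infDist z (contactSet ρ M N) = ρ} = contactSet ρ N M :=
    setOf_infDist_eq_contactSet hρ hr gap_symm contactSet_subset_left Set.Subset.rfl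
      Set.Subset.rfl contactSet_subset_left
  rw [outer_eq] at h10 ⊢
  exact ⟨(setOf_infDist_eq_contactSet hρ hr gap h00 h01 h10 h11).symm,
    (setOf_infDist_eq_contactSet hρ hr gap_symm h10 h11 h00 h01).symm⟩

end PseudoMetricSpace

section Grid

variable {m : ℕ} {ρ : ℝ} {x y : Fin m → ℝ}

theorem exists_nat_dist_eq_mul_of_mem_grid (hρ : 0 ≤ ρ) (hx : x ∈ grid m ρ)
    (hy : y ∈ grid m ρ) : ∃ n : ℕ, dist x y = ρ * n := by
  obtain h | h := (dist_nonneg (x := x) (y := y)).eq_or_lt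
  · exact ⟨0, by simp [← h]⟩
  · obtain ⟨j, hj⟩ := ((dist_pi_eq_iff h).mp rfl).1
    obtain ⟨k, hk⟩ := hx j
    obtain ⟨l, hl⟩ := hy j
    refine ⟨(k - l).natAbs, ?_⟩
    rw [← hj, Real.dist_eq, hk, hl, ← mul_sub, abs_mul, abs_of_nonneg hρ, Nat.cast_natAbs]
    push_cast
    rfl

theorem dist_eq_or_two_mul_le_dist_of_mem_grid (hρ : 0 ≤ ρ) (hx : x ∈ grid m ρ)
    (hy : y ∈ grid m ρ) (hxy : x ≠ y) : dist x y = ρ ∨ 2 * ρ ≤ dist x y := by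
  obtain ⟨n, hn⟩ := exists_nat_dist_eq_mul_of_mem_grid hρ hx hy
  have n_ne_zero : n ≠ 0 := by
    rintro rfl
    exact hxy (dist_eq_zero.mp (by simpa using hn))
  obtain rfl | two_le : n = 1 ∨ 2 ≤ n := by lia
  · exact .inl (by simpa using hn)
  · right
    rw [hn, mul_comm]
    gcongr
    exact_mod_cast two_le

end Grid

theorem stmt7 (m : ℕ) (hm : 1 ≤ m) (ρ : ℝ) (hρ : 0 < ρ)
    (M : Set (Fin m → ℝ)) (hM : M ⊆ grid m ρ) (hne : M.Nonempty)
    (H0 H1 : Set (Fin m → ℝ)) (hH0g : H0 ⊆ grid m ρ) (hH1g : H1 ⊆ grid m ρ)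
    (h00 : bdry0 m ρ M ⊆ H0) (h01 : H0 ⊆ M)
    (h10 : bdry1 m ρ M ⊆ H1) (h11 : H1 ⊆ Mᶜ ∩ grid m ρ) :
    bdry0 m ρ M = {x | x ∈ H0 ∧ Metric.infDist x H1 = ρ} ∧
    bdry1 m ρ M = {z | z ∈ H1 ∧ Metric.infDist z H0 = ρ} :=
  stmt7_general hρ (lt_two_mul_self hρ)
    (fun _ hx _ hz ↦ dist_eq_or_two_mul_le_dist_of_mem_grid hρ.le (hM hx) hz.2
      (ne_of_mem_of_not_mem hx hz.1))
    h00 h01 h10 h11
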